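/- arXiv:2107.04845 — 3 statements merged into one kernel-verified Lean document; each statement's English description precedes it below -/
import Mathlib

section
/- Let m, n ≥ 1 and let X = (X₁,…,Xₘ,A) ∈ ℝᵐ⁺¹ and (Y₁,…,Yₙ,B) ∈ ℝⁿ⁺¹ be random vectors, X := (X₁,…,Xₘ), Y := (Y₁,…,Yₙ). Suppose that for all a, a' ∈ ℝᵐ and b, b' ∈ ℝⁿ with ‖a‖² + ‖b‖² = ‖a'‖² + ‖b'‖², the random variables ⟨a,X⟩ + ⟨b,Y⟩ + A + B and ⟨a',X⟩ + ⟨b',Y⟩ + A + B have the same distribution. Then for all a, a' ∈ ℝᵐ and b, b' ∈ ℝⁿ with ‖a‖² + ‖b‖² = ‖a'‖² + ‖b'‖², the random variables ⟨a,X⟩ + ⟨b,Y⟩ and ⟨a',X⟩ + ⟨b',Y⟩ have the same distribution. -/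
open MeasureTheory ProbabilityTheory
open scoped BigOperators

lemma charFun_lim_aux {Ω : Type*} [MeasurableSpace Ω] (P : Measure Ω) [IsProbabilityMeasure P]
    (S C : Ω → ℝ) (hS : Measurable S) (hC : Measurable C) (t : ℝ) :
    Filter.Tendsto (fun k : ℕ => charFun (Measure.map (fun ω => ((k : ℝ) + 1) * S ω + C ω) P)
      (t * (1 / ((k : ℝ) + 1)))) Filter.atTop (nhds (charFun (Measure.map S P) t)) := by
  have e : ∀ k : ℕ, charFun (Measure.map (fun ω => ((k : ℝ) + 1) * S ω + C ω) P)
      (t * (1 / ((k : ℝ) + 1))) =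
      ∫ ω, Complex.exp (((t * (S ω + (1 / ((k : ℝ) + 1)) * C ω) : ℝ) : ℂ) * Complex.I) ∂P := by
    intro k
    rw [charFun_apply_real, integral_map (by fun_prop) (by fun_prop)]
    congr 1
    ext ω
    congr 2
    have : (k : ℝ) + 1 ≠ 0 := by positivity
    rw [← Complex.ofReal_mul]
    congr 1
    field_simp
  simp_rw [e]
  rw [charFun_apply_real, integral_map (by fun_prop) (by fun_prop)]
  apply tendsto_integral_of_dominated_convergence (fun _ => (1 : ℝ))
  · intro k
    exact Measurable.aestronglyMeasurable (by fun_prop)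
  · exact integrable_const _
  · intro k
    refine Filter.Eventually.of_forall fun ω => ?_
    rw [Complex.norm_exp_ofReal_mul_I]
  · refine Filter.Eventually.of_forall fun ω => ?_
    have h0 := tendsto_one_div_add_atTop_nhds_zero_nat (𝕜 := ℝ)
    have h1 : Filter.Tendsto (fun k : ℕ => t * (S ω + (1 / ((k : ℝ) + 1)) * C ω)) Filter.atTop
        (nhds (t * S ω)) := by
      simpa using ((h0.mul_const (C ω)).const_add (S ω)).const_mul t
    have hc : Continuous fun x : ℝ => Complex.exp ((x : ℂ) * Complex.I) := by fun_prop
    have h2 := (hc.tendsto _).comp h1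
    simpa [Function.comp_def] using h2

/-- If the distribution of `⟨a,X⟩ + ⟨b,Y⟩ + A + B` depends only on `‖a‖² + ‖b‖²`, then the
distribution of `⟨a,X⟩ + ⟨b,Y⟩` also depends only on `‖a‖² + ‖b‖²`. -/
theorem dist_drop_translation
    {Ω : Type*} [MeasurableSpace Ω] (P : Measure Ω) [IsProbabilityMeasure P]
    (m n : ℕ) (hm : 1 ≤ m) (hn : 1 ≤ n)
    (X : Fin m → Ω → ℝ) (Y : Fin n → Ω → ℝ) (A B : Ω → ℝ)
    (hX : ∀ i, Measurable (X i)) (hY : ∀ j, Measurable (Y j))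
    (hA : Measurable A) (hB : Measurable B)
    (hdist : ∀ (a a' : Fin m → ℝ) (b b' : Fin n → ℝ),
      (∑ i, (a i) ^ 2) + (∑ j, (b j) ^ 2) = (∑ i, (a' i) ^ 2) + (∑ j, (b' j) ^ 2) →
      Measure.map (fun ω => (∑ i, a i * X i ω) + (∑ j, b j * Y j ω) + A ω + B ω) P =
        Measure.map (fun ω => (∑ i, a' i * X i ω) + (∑ j, b' j * Y j ω) + A ω + B ω) P) :
    ∀ (a a' : Fin m → ℝ) (b b' : Fin n → ℝ),
      (∑ i, (a i) ^ 2) + (∑ j, (b j) ^ 2) = (∑ i, (a' i) ^ 2) + (∑ j, (b' j) ^ 2) →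
      Measure.map (fun ω => (∑ i, a i * X i ω) + (∑ j, b j * Y j ω)) P =
        Measure.map (fun ω => (∑ i, a' i * X i ω) + (∑ j, b' j * Y j ω)) P := by
  intro a a' b b' h
  have hS : ∀ (a : Fin m → ℝ) (b : Fin n → ℝ),
      Measurable (fun ω => (∑ i, a i * X i ω) + (∑ j, b j * Y j ω)) := by
    intro a b
    fun_prop
  have := Measure.isProbabilityMeasure_map (μ := P) (hS a b).aemeasurable
  have := Measure.isProbabilityMeasure_map (μ := P) (hS a' b').aemeasurable
  apply Measure.ext_of_charFun
  ext t
  refine tendsto_nhds_unique (charFun_lim_aux P _ (fun ω => A ω + B ω) (hS a b) (by fun_prop) t) ?_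
  refine (charFun_lim_aux P _ (fun ω => A ω + B ω) (hS a' b') (by fun_prop) t).congr fun k => ?_
  have key := hdist (fun i => ((k : ℝ) + 1) * a i) (fun i => ((k : ℝ) + 1) * a' i)
    (fun i => ((k : ℝ) + 1) * b i) (fun i => ((k : ℝ) + 1) * b' i) (by
      simp only [mul_pow, ← Finset.mul_sum, ← mul_add, h])
  simp only [mul_assoc, ← Finset.mul_sum, ← mul_add, add_assoc] at key
  simp only [mul_add, add_assoc] at key ⊢
  rw [key]
end

section
/- Let m, n ≥ 1, let X ∈ ℝᵐ and Y ∈ ℝⁿ be independent random vectors, and suppose there exists a function h : [0,∞) → ℂ such that E[e^{i(⟨a,X⟩ + ⟨b,Y⟩)}] = h(‖a‖² + ‖b‖²) for all a ∈ ℝᵐ and b ∈ ℝⁿ. Then h(s + t) = h(s)·h(t) for all s, t ≥ 0, and moreover h(‖a‖²) = E[e^{i⟨a,X⟩}] for all a ∈ ℝᵐ and h(‖b‖²) = E[e^{i⟨b,Y⟩}] for all b ∈ ℝⁿ. -/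
open MeasureTheory ProbabilityTheory
open scoped BigOperators

/-- If `X ∈ ℝᵐ` and `Y ∈ ℝⁿ` are independent random vectors whose joint characteristic
function `E[exp(i(⟨a,X⟩ + ⟨b,Y⟩))]` equals `h (‖a‖² + ‖b‖²)` for some function `h`, then `h`
satisfies the multiplicative Cauchy equation on `[0,∞)`, and `h (‖a‖²) = φ_X a`,
`h (‖b‖²) = φ_Y b`. -/
theorem charFun_radial_cauchy
    {Ω : Type*} [MeasurableSpace Ω] (P : Measure Ω) [IsProbabilityMeasure P]
    (m n : ℕ) (hm : 1 ≤ m) (hn : 1 ≤ n)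
    (X : Ω → Fin m → ℝ) (Y : Ω → Fin n → ℝ)
    (hX : Measurable X) (hY : Measurable Y)
    (hindep : IndepFun X Y P)
    (h : ℝ → ℂ)
    (hh : ∀ (a : Fin m → ℝ) (b : Fin n → ℝ),
      ∫ ω, Complex.exp (Complex.I * ((∑ i, a i * X ω i) + (∑ j, b j * Y ω j) : ℝ)) ∂P
        = h ((∑ i, (a i) ^ 2) + (∑ j, (b j) ^ 2))) :
    (∀ s t : ℝ, 0 ≤ s → 0 ≤ t → h (s + t) = h s * h t) ∧
    (∀ a : Fin m → ℝ,
      h (∑ i, (a i) ^ 2) = ∫ ω, Complex.exp (Complex.I * ((∑ i, a i * X ω i : ℝ) : ℂ)) ∂P) ∧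
    (∀ b : Fin n → ℝ,
      h (∑ j, (b j) ^ 2) = ∫ ω, Complex.exp (Complex.I * ((∑ j, b j * Y ω j : ℝ) : ℂ)) ∂P) := by
  have hA : ∀ a : Fin m → ℝ,
      h (∑ i, (a i) ^ 2) = ∫ ω, Complex.exp (Complex.I * ((∑ i, a i * X ω i : ℝ) : ℂ)) ∂P := by
    intro a
    have := hh a 0
    simp only [Pi.zero_apply, zero_mul, Finset.sum_const_zero, add_zero, ne_eq,
      OfNat.ofNat_ne_zero, not_false_eq_true, zero_pow] at this
    exact this.symm
  have hB : ∀ b : Fin n → ℝ,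
      h (∑ j, (b j) ^ 2) = ∫ ω, Complex.exp (Complex.I * ((∑ j, b j * Y ω j : ℝ) : ℂ)) ∂P := by
    intro b
    have := hh 0 b
    simp only [Pi.zero_apply, zero_mul, Finset.sum_const_zero, zero_add, ne_eq,
      OfNat.ofNat_ne_zero, not_false_eq_true, zero_pow] at this
    exact this.symm
  refine ⟨?_, hA, hB⟩
  intro s t hs ht
  have key : ∀ (k : ℕ), 1 ≤ k → ∀ r : ℝ, 0 ≤ r → ∃ a : Fin k → ℝ, ∑ i, (a i) ^ 2 = r := by
    intro k hk r hr
    refine ⟨Pi.single ⟨0, hk⟩ (Real.sqrt r), ?_⟩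
    rw [Finset.sum_eq_single (⟨0, hk⟩ : Fin k)]
    · simp [Real.sq_sqrt hr]
    · intro b _ hb
      simp [Pi.single_eq_of_ne hb]
    · simp
  obtain ⟨a, rfl⟩ := key m hm s hs
  obtain ⟨b, rfl⟩ := key n hn t ht
  rw [← hh a b, hA a, hB b]
  have hmeas : ∀ (k : ℕ) (c : Fin k → ℝ),
      Measurable (fun x : Fin k → ℝ => Complex.exp (Complex.I * ((∑ i, c i * x i : ℝ) : ℂ))) := by
    intro k c
    fun_prop
  have := IndepFun.integral_fun_comp_mul_comp hindep hX.aemeasurable hY.aemeasurable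
    (hmeas m a).aestronglyMeasurable (hmeas n b).aestronglyMeasurable
  rw [← this]
  congr 1
  ext ω
  rw [← Complex.exp_add, Complex.ofReal_add, mul_add]
end

section
/- For every z ∈ ℝ, ∫₀^{2π} e^{iz cos α} dα = ∫₀^{2π} cos(z cos α) dα = ∫₀^{2π} cos(z sin α) dα = 2π J(z), where J(z) = Σ_{k=0}^{∞} (−1)^k (z²/4)^k / (k!)² is the Bessel function of the first kind of order zero. -/
open scoped Real

/-- The Bessel function of the first kind of order zero, defined by its everywhere-convergent
power series `J(z) = ∑_{k=0}^∞ (−1)^k (z²/4)^k / (k!)²`. -/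
noncomputable def besselJ0 (z : ℝ) : ℝ :=
  ∑' k : ℕ, (-1 : ℝ) ^ k * (z ^ 2 / 4) ^ k / ((Nat.factorial k : ℝ)) ^ 2

lemma moment_sin (k : ℕ) : (∫ α in (0 : ℝ)..(2 * π), Real.sin α ^ (2 * k))
    = 2 * π * ((Nat.factorial (2 * k) : ℝ) / (4 ^ k * (Nat.factorial k : ℝ) ^ 2)) := by
  induction k with
  | zero => simp
  | succ k ih =>
    rw [show 2 * (k + 1) = 2 * k + 2 by ring, integral_sin_pow, ih, Nat.factorial_succ,
      Nat.factorial_succ, Nat.factorial_succ]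
    have h : (Nat.factorial k : ℝ) ≠ 0 := by positivity
    have h2 : (k : ℝ) + 1 ≠ 0 := by positivity
    simp only [Real.sin_zero, Real.sin_two_pi]
    push_cast
    field_simp
    ring

lemma integral_cos_sin (z : ℝ) :
    (∫ α in (0 : ℝ)..(2 * π), Real.cos (z * Real.sin α)) = 2 * π * besselJ0 z := by
  have key := intervalIntegral.hasSum_integral_of_dominated_convergence
    (μ := MeasureTheory.volume) (a := 0) (b := 2 * π)
    (F := fun (k : ℕ) α => (-1 : ℝ) ^ k * (z * Real.sin α) ^ (2 * k) / (Nat.factorial (2 * k) : ℝ))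
    (f := fun α => Real.cos (z * Real.sin α))
    (fun k _ => |z| ^ (2 * k) / (Nat.factorial (2 * k) : ℝ))
    (fun k => (by fun_prop : Continuous _).aestronglyMeasurable)
    (fun k => Filter.Eventually.of_forall fun α _ => by
      simp only [norm_div, norm_mul, norm_pow, norm_neg, norm_one, one_pow, one_mul,
        Real.norm_eq_abs, Nat.abs_cast]
      gcongr
      exact mul_le_of_le_one_right (abs_nonneg _) (Real.abs_sin_le_one _))
    (Filter.Eventually.of_forall fun α _ => (Real.hasSum_cosh |z|).summable)
    (by simp)
    (Filter.Eventually.of_forall fun α _ => Real.hasSum_cos _)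
  rw [← key.tsum_eq, besselJ0, ← tsum_mul_left]
  congr 1
  ext k
  have : (fun α => (-1 : ℝ) ^ k * (z * Real.sin α) ^ (2 * k) / (Nat.factorial (2 * k) : ℝ))
      = fun α => ((-1 : ℝ) ^ k * z ^ (2 * k) / (Nat.factorial (2 * k) : ℝ)) *
        Real.sin α ^ (2 * k) := by
    ext α; rw [mul_pow]; ring
  rw [this, intervalIntegral.integral_const_mul, moment_sin, div_pow, ← pow_mul]
  have h : (Nat.factorial k : ℝ) ≠ 0 := by positivity
  have h2 : (Nat.factorial (2 * k) : ℝ) ≠ 0 := by positivity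
  field_simp

lemma shift_int (f : ℝ → ℝ) (hf : Function.Periodic f (2 * π)) (c : ℝ) :
    (∫ α in (0 : ℝ)..(2 * π), f (α + c)) = ∫ α in (0 : ℝ)..(2 * π), f α := by
  rw [intervalIntegral.integral_comp_add_right, zero_add, add_comm (2 * π) c,
    hf.intervalIntegral_add_eq c 0, zero_add]

lemma integral_cos_cos (z : ℝ) :
    (∫ α in (0 : ℝ)..(2 * π), Real.cos (z * Real.cos α)) = 2 * π * besselJ0 z := by
  rw [← integral_cos_sin, ← shift_int (fun α => Real.cos (z * Real.sin α))
    (fun α => by simp) (π / 2)]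
  simp [Real.sin_add_pi_div_two]

lemma integral_sin_cos (z : ℝ) :
    (∫ α in (0 : ℝ)..(2 * π), Real.sin (z * Real.cos α)) = 0 := by
  have := shift_int (fun α => Real.sin (z * Real.cos α)) (fun α => by simp) π
  simp only [Real.cos_add_pi, mul_neg, Real.sin_neg, intervalIntegral.integral_neg] at this
  linarith

/-- For every real `z`,
`∫₀^{2π} e^{iz cos α} dα = ∫₀^{2π} cos(z cos α) dα = ∫₀^{2π} cos(z sin α) dα = 2π J(z)`,
where `J` is the Bessel function of the first kind of order zero. -/
theorem integral_exp_cos_eq_besselJ0 (z : ℝ) :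
    (∫ α in (0 : ℝ)..(2 * π), Complex.exp (((z * Real.cos α : ℝ) : ℂ) * Complex.I))
        = ((2 * π * besselJ0 z : ℝ) : ℂ) ∧
    (∫ α in (0 : ℝ)..(2 * π), Real.cos (z * Real.cos α)) = 2 * π * besselJ0 z ∧
    (∫ α in (0 : ℝ)..(2 * π), Real.cos (z * Real.sin α)) = 2 * π * besselJ0 z := by
  refine ⟨?_, integral_cos_cos z, integral_cos_sin z⟩
  have h : ∀ α : ℝ, Complex.exp (((z * Real.cos α : ℝ) : ℂ) * Complex.I)
      = ((Real.cos (z * Real.cos α) : ℝ) : ℂ)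
        + ((Real.sin (z * Real.cos α) : ℝ) : ℂ) * Complex.I := by
    intro α
    rw [Complex.exp_mul_I, Complex.ofReal_cos, Complex.ofReal_sin]
  simp_rw [h]
  rw [intervalIntegral.integral_add, intervalIntegral.integral_mul_const,
    intervalIntegral.integral_ofReal, intervalIntegral.integral_ofReal,
    integral_cos_cos, integral_sin_cos]
  · simp
  · exact (by fun_prop : Continuous _).intervalIntegrable _ _
  · exact (by fun_prop : Continuous _).intervalIntegrable _ _
end
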